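/- For any ring R and R-module M with n ≥ 1, fd_R(M) ≤ n if and only if Ext^1_R(M,N)=0 for every L_n-injective R-module N. -/

import Mathlib

open CategoryTheory

/-- Flatness of a module over an arbitrary (possibly noncommutative) ring,
via the equational criterion: every relation is a consequence of trivial relations. -/
def IsFlatMod (R : Type) [Ring R] (M : Type) [AddCommGroup M] [Module R M] : Prop :=
  ∀ (ι : Type) (_ : Fintype ι) (r : ι → R) (x : ι → M),
    (∑ i, r i • x i = 0) →
      ∃ (κ : Type) (_ : Fintype κ) (a : ι → κ → R) (y : κ → M),
        (∀ i, x i = ∑ j, a i j • y j) ∧ ∀ j, (∑ i, r i * a i j) = 0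

variable (R : Type) [Ring R]

/-- `Ext^n_R(M, N) = 0`. -/
def extVanish (n : ℕ) (M N : ModuleCat.{0} R) : Prop :=
  Subsingleton (((Ext ℤ (ModuleCat.{0} R) n).obj (Opposite.op M)).obj N)

/-- `M` has flat dimension at most `n`. -/
def fdLE : ℕ → ModuleCat.{0} R → Prop
  | 0, M => IsFlatMod R M
  | n+1, M => ∃ (K F : ModuleCat.{0} R) (f : K ⟶ F) (g : F ⟶ M),
      IsFlatMod R F ∧ Function.Injective f ∧ Function.Surjective g ∧
        Function.Exact f g ∧ fdLE n K

/-- `W` is `L_n`-injective: `Ext^1_R(M, W) = 0` for every `M` of flat dimension at most `n`. -/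
def LnInj (n : ℕ) (W : ModuleCat.{0} R) : Prop :=
  ∀ M : ModuleCat.{0} R, fdLE R n M → extVanish R 1 M W

/-!
For a finite family `r` in `R`, let `W_r` be the character module of the right module
`R ⧸ ∑ i, r i R`. Linear maps `K → W_r` correspond to characters of `K ⧸ ∑ i, r i K`. As `ℚ ⧸ ℤ` is
an injective cogenerator, every linear map `K → W_r` extends along an inclusion `K ⊆ G` if and only
if `K ∩ ∑ i, r i G = ∑ i, r i K`, and for flat `G` these conditions for all `r` say that `G ⧸ K` is
flat. Dimension shifting gives: `fd M ≤ n` if and only if `Ext^(n+1)(M, W_r) = 0` for all `r`.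
An `n`-th cosyzygy `N` of `W_r` satisfies `Ext^1(-, N) = 0 ↔ Ext^(n+1)(-, W_r) = 0`, so it is
`L_n`-injective, and these cosyzygies already detect `fd M ≤ n`.
-/

section Modules

variable {A : Type*} [Ring A] {K G F : Type*} [AddCommGroup K] [Module A K]
  [AddCommGroup G] [Module A G] [AddCommGroup F] [Module A F] {f : K →ₗ[A] G} {g : G →ₗ[A] F}

theorem sum_smul_sum_smul {ι κ : Type*} [Fintype ι] [Fintype κ] (r : ι → A) (a : ι → κ → A)
    (y : κ → F) : ∑ i, r i • ∑ j, a i j • y j = ∑ j, (∑ i, r i * a i j) • y j := by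
  simp_rw [Finset.smul_sum, Finset.sum_smul, mul_smul]
  exact Finset.sum_comm

theorem exists_eq_map_add_sum_smul (hfg : Function.Exact f g) (hg : Function.Surjective g)
    {ι κ : Type*} [Fintype κ] {x : ι → G} {a : ι → κ → A} {y : κ → F}
    (hx : ∀ i, g (x i) = ∑ j, a i j • y j) :
    ∃ (u : ι → K) (w : κ → G), ∀ i, x i = f (u i) + ∑ j, a i j • w j := by
  choose w hw using fun j ↦ hg (y j)
  have hker (i : ι) : ∃ u, f u = x i - ∑ j, a i j • w j :=
    (hfg _).1 (by simp [hw, hx])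
  choose u hu using hker
  exact ⟨u, w, fun i ↦ by simp [hu]⟩

/-- The subgroup `∑ i, r i • M` of `M`, that is, `I M` for the right ideal `I` generated by the
family `r`. The quotient by it stands in for `(A ⧸ I) ⊗ M`. -/
def smulSubgroup {ι : Type*} [Fintype ι] (r : ι → A) (M : Type*) [AddCommGroup M] [Module A M] :
    AddSubgroup M where
  carrier := {m | ∃ x : ι → M, ∑ i, r i • x i = m}
  zero_mem' := ⟨0, by simp⟩
  add_mem' := by
    rintro _ _ ⟨x, rfl⟩ ⟨y, rfl⟩
    exact ⟨x + y, by simp [Finset.sum_add_distrib]⟩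
  neg_mem' := by
    rintro _ ⟨x, rfl⟩
    exact ⟨-x, by simp⟩

variable {ι : Type*} [Fintype ι] (r : ι → A)

theorem smul_mem_smulSubgroup (i : ι) (x : K) : r i • x ∈ smulSubgroup r K := by
  classical
  exact ⟨Pi.single i x, by simp [Pi.single_apply]⟩

theorem smulSubgroup_le_comap (f : K →ₗ[A] G) :
    smulSubgroup r K ≤ (smulSubgroup r G).comap f.toAddMonoidHom := by
  rintro _ ⟨x, rfl⟩
  exact ⟨fun i ↦ f (x i), by simp⟩

/-- The map `K ⧸ I K → G ⧸ I G` induced by `f`, where `I` is the right ideal generated by `r`. -/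
def quotientSMulMap (f : K →ₗ[A] G) : K ⧸ smulSubgroup r K →+ G ⧸ smulSubgroup r G :=
  QuotientAddGroup.map _ _ f.toAddMonoidHom (smulSubgroup_le_comap r f)

theorem injective_quotientSMulMap_iff :
    Function.Injective (quotientSMulMap r f) ↔
      ∀ k, f k ∈ smulSubgroup r G → k ∈ smulSubgroup r K := by
  rw [injective_iff_map_eq_zero]
  refine QuotientAddGroup.mk_surjective.forall.trans (forall_congr' fun k ↦ ?_)
  rw [← QuotientAddGroup.eq_zero_iff, ← QuotientAddGroup.eq_zero_iff]
  rfl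

end Modules

section TestModules

variable {A : Type*} [Ring A] {ι : Type*} (r : ι → A)

/-- The character module of the right module `A ⧸ I`, where `I` is the right ideal generated by the
family `r`, encoded as the group of characters of `A` that vanish on `I`. Vanishing of
`Ext` into these modules detects flat dimension. -/
def vanishingCharacters : AddSubgroup (A →+ AddCircle (1 : ℚ)) where
  carrier := {χ | ∀ i s, χ (r i * s) = 0}
  zero_mem' := by simp
  add_mem' hχ hψ i s := by simp [hχ i s, hψ i s]
  neg_mem' hχ i s := by simp [hχ i s]

namespace vanishingCharacters

instance : SMul A (vanishingCharacters r) where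
  smul t χ := ⟨χ.1.comp (AddMonoidHom.mulRight t), fun i s ↦ by
    simpa [mul_assoc] using χ.2 i (s * t)⟩

variable {r}

theorem smul_apply (t : A) (χ : vanishingCharacters r) (s : A) : (t • χ).1 s = χ.1 (s * t) := rfl

instance : Module A (vanishingCharacters r) where
  one_smul χ := by ext; simp [smul_apply]
  mul_smul s t χ := by ext; simp [smul_apply, mul_assoc]
  smul_zero t := by ext; simp [smul_apply]
  smul_add t χ ψ := by ext; simp [smul_apply]
  add_smul s t χ := by ext; simp [smul_apply, mul_add]
  zero_smul χ := by ext; simp [smul_apply]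

variable [Fintype ι] {K G : Type*} [AddCommGroup K] [Module A K] [AddCommGroup G] [Module A G]

variable (r K) in
/-- The adjunction `Hom(K, (A ⧸ I)⋆) ≃ ((A ⧸ I) ⊗ K)⋆`, where `I` is the right ideal generated by
`r`: a linear map `h` corresponds to the character `x ↦ h x 1`. -/
def homEquiv : (K →ₗ[A] vanishingCharacters r) ≃ CharacterModule (K ⧸ smulSubgroup r K) where
  toFun h := QuotientAddGroup.lift _
    ((AddMonoidHom.eval 1).comp ((vanishingCharacters r).subtype.comp h.toAddMonoidHom)) <| by
      rintro _ ⟨x, rfl⟩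
      have hx (i : ι) : (h (x i)).1 (r i) = 0 := by simpa using (h (x i)).2 i 1
      simp [smul_apply, hx]
  invFun χ :=
    { toFun x := ⟨(AddMonoidHom.comp χ (QuotientAddGroup.mk' _)).comp
          ((smulAddHom A K).flip x), fun i s ↦ by
        have hs : QuotientAddGroup.mk' (smulSubgroup r K) ((r i * s) • x) = 0 := by
          rw [mul_smul]
          exact (QuotientAddGroup.eq_zero_iff _).2 (smul_mem_smulSubgroup r i _)
        exact (congrArg χ hs).trans (map_zero χ)⟩
      map_add' x y := by ext; simp
      map_smul' t x := by ext; simp [smul_apply, mul_smul] }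
  left_inv h := by
    ext x s
    change (h (s • x)).1 1 = (h x).1 s
    rw [map_smul, smul_apply, one_mul]
  right_inv χ := by
    ext x
    induction x using QuotientAddGroup.induction_on with
    | H x => exact congrArg (fun y ↦ χ (QuotientAddGroup.mk y)) (one_smul A x)

theorem homEquiv_comp (f : K →ₗ[A] G) (h : G →ₗ[A] vanishingCharacters r) :
    homEquiv r K (h ∘ₗ f) =
      CharacterModule.dual (quotientSMulMap r f).toIntLinearMap (homEquiv r G h) := by
  ext x
  induction x using QuotientAddGroup.induction_on with
  | H x => rfl

theorem forall_exists_comp_eq_iff {f : K →ₗ[A] G} :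
    (∀ h : K →ₗ[A] vanishingCharacters r, ∃ h' : G →ₗ[A] vanishingCharacters r, h' ∘ₗ f = h) ↔
      ∀ k, f k ∈ smulSubgroup r G → k ∈ smulSubgroup r K := by
  have hdual : (∀ h : K →ₗ[A] vanishingCharacters r, ∃ h', h' ∘ₗ f = h) ↔
      Function.Surjective (CharacterModule.dual (quotientSMulMap r f).toIntLinearMap) := by
    rw [Function.Surjective, (homEquiv r K).surjective.forall]
    simp_rw [(homEquiv r G).surjective.exists, ← homEquiv_comp, (homEquiv r K).apply_eq_iff_eq]
  rw [hdual, CharacterModule.dual_surjective_iff_injective]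
  exact injective_quotientSMulMap_iff r

end vanishingCharacters

end TestModules

section FlatModules

variable {R} {K G F : Type} [AddCommGroup K] [Module R K] [AddCommGroup G] [Module R G]
  [AddCommGroup F] [Module R F] {f : K →ₗ[R] G} {g : G →ₗ[R] F}

theorem IsFlatMod.of_free (M : Type) [AddCommGroup M] [Module R M] [Module.Free R M] :
    IsFlatMod R M := by
  classical
  intro ι _ r x hx
  let b := Module.Free.chooseBasis R M
  let s : Finset (Module.Free.ChooseBasisIndex R M) :=
    Finset.univ.biUnion fun i ↦ (b.repr (x i)).support
  refine ⟨s, inferInstance, fun i j ↦ b.repr (x i) j, fun j ↦ b j, fun i ↦ ?_, fun j ↦ ?_⟩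
  · have hs : (b.repr (x i)).support ⊆ s :=
      Finset.subset_biUnion_of_mem (fun i ↦ (b.repr (x i)).support) (Finset.mem_univ i)
    rw [Finset.sum_coe_sort s (fun j ↦ b.repr (x i) j • b j)]
    conv_lhs => rw [← b.linearCombination_repr (x i), Finsupp.linearCombination_apply]
    exact Finsupp.sum_of_support_subset _ hs _ (by simp)
  · simpa [Finsupp.finsetSum_apply] using DFunLike.congr_fun (congrArg b.repr hx) j.1

theorem IsFlatMod.exists_of_forall_mem_sum_smul_eq_zero (hF : IsFlatMod R F) {ι m : Type}
    [Fintype ι] (s : Finset m) (r : m → ι → R) (x : ι → F) (hx : ∀ l ∈ s, ∑ i, r l i • x i = 0) :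
    ∃ (κ : Type) (_ : Fintype κ) (a : ι → κ → R) (y : κ → F),
      (∀ i, x i = ∑ j, a i j • y j) ∧ ∀ l ∈ s, ∀ j, ∑ i, r l i * a i j = 0 := by
  classical
  induction s using Finset.induction with
  | empty => exact ⟨ι, inferInstance, fun i j ↦ if i = j then 1 else 0, x, by simp, by simp⟩
  | insert l s _ ih =>
    obtain ⟨κ, _, a, y, hxy, ha⟩ := ih fun l' hl' ↦ hx l' (Finset.mem_insert_of_mem hl')
    have hy : ∑ j, (∑ i, r l i * a i j) • y j = 0 := by
      rw [← sum_smul_sum_smul, ← hx l (Finset.mem_insert_self l s)]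
      simp_rw [hxy]
    obtain ⟨μ, _, b, z, hyz, hb⟩ := hF κ inferInstance _ y hy
    have hassoc (l' : m) (k : μ) :
        ∑ i, r l' i * ∑ j, a i j * b j k = ∑ j, (∑ i, r l' i * a i j) * b j k :=
      sum_smul_sum_smul (r l') a (b · k)
    refine ⟨μ, inferInstance, fun i k ↦ ∑ j, a i j * b j k, z, fun i ↦ ?_, fun l' hl' k ↦ ?_⟩
    · rw [← sum_smul_sum_smul, hxy]
      simp_rw [hyz]
    · rw [hassoc]
      obtain rfl | hl' := Finset.mem_insert.1 hl'
      · exact hb k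
      · simp [ha l' hl']

theorem IsFlatMod.left_of_exact (hG : IsFlatMod R G) (hF : IsFlatMod R F)
    (hf : Function.Injective f) (hfg : Function.Exact f g) (hg : Function.Surjective g) :
    IsFlatMod R K := by
  intro ι _ r x hx
  obtain ⟨κ, _, a, y, hxy, ha⟩ := hG ι inferInstance r (fun i ↦ f (x i)) (by
    simpa using congrArg f hx)
  have hgy (i : ι) : ∑ j, a i j • g (y j) = 0 := by
    simpa [hfg.apply_apply_eq_zero] using (congrArg g (hxy i)).symm
  obtain ⟨μ, _, b, z, hyz, hb⟩ :=
    hF.exists_of_forall_mem_sum_smul_eq_zero Finset.univ a _ fun i _ ↦ hgy i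
  obtain ⟨u, w, hyu⟩ := exists_eq_map_add_sum_smul hfg hg hyz
  refine ⟨κ, inferInstance, a, u, fun i ↦ hf ?_, ha⟩
  calc f (x i) = ∑ j, a i j • (f (u j) + ∑ k, b j k • w k) := by simp_rw [hxy, hyu]
    _ = f (∑ j, a i j • u j) + ∑ k, (∑ j, a i j * b j k) • w k := by
      simp [smul_add, Finset.sum_add_distrib, sum_smul_sum_smul]
    _ = f (∑ j, a i j • u j) := by simp [hb]

theorem IsFlatMod.mem_smulSubgroup_of_map_mem (hF : IsFlatMod R F) (hf : Function.Injective f)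
    (hfg : Function.Exact f g) (hg : Function.Surjective g) {ι : Type} [Fintype ι] (r : ι → R)
    {k : K} (hk : f k ∈ smulSubgroup r G) : k ∈ smulSubgroup r K := by
  obtain ⟨x, hx⟩ := hk
  obtain ⟨κ, _, a, y, hxy, ha⟩ := hF ι inferInstance r (fun i ↦ g (x i)) (by
    simpa [hfg.apply_apply_eq_zero] using congrArg g hx)
  obtain ⟨u, w, hxu⟩ := exists_eq_map_add_sum_smul hfg hg hxy
  refine ⟨u, hf ?_⟩
  calc f (∑ i, r i • u i) = f (∑ i, r i • u i) + ∑ j, (∑ i, r i * a i j) • w j := by simp [ha]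
    _ = ∑ i, r i • (f (u i) + ∑ j, a i j • w j) := by
      simp [smul_add, Finset.sum_add_distrib, sum_smul_sum_smul]
    _ = f k := by simp_rw [← hxu, hx]

theorem IsFlatMod.of_mem_smulSubgroup_of_map_mem (hG : IsFlatMod R G) (hfg : Function.Exact f g)
    (hg : Function.Surjective g)
    (hpure : ∀ (ι : Type) [Fintype ι] (r : ι → R) (k : K),
      f k ∈ smulSubgroup r G → k ∈ smulSubgroup r K) : IsFlatMod R F := by
  intro ι _ r x hx
  choose w hw using fun i ↦ hg (x i)
  obtain ⟨k, hk⟩ := (hfg (∑ i, r i • w i)).1 (by simp [hw, hx])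
  obtain ⟨u, rfl⟩ := hpure ι r k ⟨w, hk.symm⟩
  obtain ⟨κ, _, a, y, hwy, ha⟩ := hG ι inferInstance r (fun i ↦ w i - f (u i)) (by
    simp [smul_sub, Finset.sum_sub_distrib, ← hk])
  refine ⟨κ, inferInstance, a, fun j ↦ g (y j), fun i ↦ ?_, ha⟩
  simpa [hw, hfg.apply_apply_eq_zero] using congrArg g (hwy i)

end FlatModules

section Ext

universe w v u

variable {C : Type u} [Category.{v} C] [Abelian C]

/-- `Ext` is the derived functor computed by a projective resolution, whereas `Abelian.Ext` is
defined in the derived category and comes with the long exact sequences. -/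
theorem subsingleton_leftDerivedExt_iff [EnoughProjectives C] [HasExt.{w} C] (S : Type*) [Ring S]
    [Linear S C] (X Y : C) (n : ℕ) :
    Subsingleton (((Ext S C (n + 1)).obj (Opposite.op X)).obj Y) ↔
      Subsingleton (Abelian.Ext X Y (n + 1)) := by
  let P := projectiveResolution X
  trans ∀ f : P.complex.X (n + 1) ⟶ Y, P.complex.d (n + 2) (n + 1) ≫ f = 0 →
      ∃ g : P.complex.X n ⟶ Y, P.complex.d (n + 1) n ≫ g = f
  · rw [← ModuleCat.isZero_iff_subsingleton, (P.isoExt (n + 1) Y).isZero_iff,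
      ← HomologicalComplex.exactAt_iff_isZero_homology,
      HomologicalComplex.exactAt_iff' _ n (n + 1) (n + 2) (by simp) (by simp),
      ShortComplex.moduleCat_exact_iff]
    rfl
  · constructor
    · refine fun h ↦ subsingleton_of_forall_eq 0 fun x ↦ ?_
      obtain ⟨f, hf, rfl⟩ := P.extMk_surjective x (n + 2) rfl
      exact (P.extMk_eq_zero_iff f _ rfl hf n rfl).2 (h f hf)
    · exact fun h f hf ↦ (P.extMk_eq_zero_iff f _ rfl hf n rfl).1 (Subsingleton.elim _ _)

variable [HasExt.{w} C] {S : ShortComplex C}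

theorem subsingleton_ext_X₃_succ_iff (hS : S.ShortExact) {Y : C} {n : ℕ}
    (h : Subsingleton (Abelian.Ext S.X₂ Y n)) (h' : Subsingleton (Abelian.Ext S.X₂ Y (n + 1))) :
    Subsingleton (Abelian.Ext S.X₃ Y (n + 1)) ↔ Subsingleton (Abelian.Ext S.X₁ Y n) := by
  constructor <;> refine fun _ ↦ subsingleton_of_forall_eq 0 fun x ↦ ?_
  · obtain ⟨y, rfl⟩ := Abelian.Ext.contravariant_sequence_exact₁ hS Y x (add_comm 1 n)
      (Subsingleton.elim _ _)
    rw [Subsingleton.elim y 0, Abelian.Ext.comp_zero]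
  · obtain ⟨y, rfl⟩ := Abelian.Ext.contravariant_sequence_exact₃ hS Y x
      (Subsingleton.elim _ _) (add_comm 1 n)
    rw [Subsingleton.elim y 0, Abelian.Ext.comp_zero]

theorem subsingleton_ext_X₁_succ_iff (hS : S.ShortExact) {X : C} {n : ℕ}
    (h : Subsingleton (Abelian.Ext X S.X₂ n)) (h' : Subsingleton (Abelian.Ext X S.X₂ (n + 1))) :
    Subsingleton (Abelian.Ext X S.X₁ (n + 1)) ↔ Subsingleton (Abelian.Ext X S.X₃ n) := by
  constructor <;> refine fun _ ↦ subsingleton_of_forall_eq 0 fun x ↦ ?_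
  · obtain ⟨y, rfl⟩ := Abelian.Ext.covariant_sequence_exact₃ X hS x rfl (Subsingleton.elim _ _)
    rw [Subsingleton.elim y 0, Abelian.Ext.zero_comp]
  · obtain ⟨y, rfl⟩ := Abelian.Ext.covariant_sequence_exact₁ X hS x (Subsingleton.elim _ _) rfl
    rw [Subsingleton.elim y 0, Abelian.Ext.zero_comp]

theorem subsingleton_ext_X₃_one_iff (hS : S.ShortExact) {Y : C}
    (h : Subsingleton (Abelian.Ext S.X₂ Y 1)) :
    Subsingleton (Abelian.Ext S.X₃ Y 1) ↔ ∀ f : S.X₁ ⟶ Y, ∃ g : S.X₂ ⟶ Y, S.f ≫ g = f := by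
  constructor
  · intro _ f
    obtain ⟨y, hy⟩ := Abelian.Ext.contravariant_sequence_exact₁ hS Y (Abelian.Ext.mk₀ f)
      (add_zero 1) (Subsingleton.elim _ _)
    obtain ⟨g, rfl⟩ := (Abelian.Ext.mk₀_bijective _ _).surjective y
    exact ⟨g, (Abelian.Ext.mk₀_bijective _ _).injective (by rw [← hy, Abelian.Ext.mk₀_comp_mk₀])⟩
  · refine fun hext ↦ subsingleton_of_forall_eq 0 fun x ↦ ?_
    obtain ⟨y, rfl⟩ := Abelian.Ext.contravariant_sequence_exact₃ hS Y x
      (Subsingleton.elim _ _) (add_zero 1)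
    obtain ⟨f, rfl⟩ := (Abelian.Ext.mk₀_bijective _ _).surjective y
    obtain ⟨g, rfl⟩ := hext f
    rw [← Abelian.Ext.mk₀_comp_mk₀]
    exact hS.extClass_comp_assoc _

theorem exists_cosyzygy [EnoughInjectives C] (n : ℕ) (Y : C) :
    ∃ N : C, ∀ X : C,
      Subsingleton (Abelian.Ext X N 1) ↔ Subsingleton (Abelian.Ext X Y (n + 1)) := by
  induction n generalizing Y with
  | zero => exact ⟨Y, fun X ↦ Iff.rfl⟩
  | succ n ih =>
    obtain ⟨I⟩ := EnoughInjectives.presentation Y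
    obtain ⟨N, hN⟩ := ih I.shortComplex.X₃
    have : Injective I.shortComplex.X₂ := I.injective
    exact ⟨N, fun X ↦ (hN X).trans (subsingleton_ext_X₁_succ_iff I.shortExact_shortComplex
      (Abelian.Ext.subsingleton_of_injective _ _ n)
      (Abelian.Ext.subsingleton_of_injective _ _ (n + 1))).symm⟩

end Ext

section FlatDimension

variable {R} {M : ModuleCat.{0} R}

theorem isFlatMod_iff_subsingleton_ext_one :
    IsFlatMod R M ↔ ∀ (ι : Type) [Fintype ι] (r : ι → R),
      Subsingleton (Abelian.Ext M (ModuleCat.of R (vanishingCharacters r)) 1) := by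
  let S := M.projectiveShortComplex
  have hS : S.ShortExact := M.shortExact_projectiveShortComplex
  have hfg := (ShortComplex.ShortExact.moduleCat_exact_iff_function_exact S).1 hS.exact
  have hflat : IsFlatMod R S.X₂ := .of_free M.projectiveShortComplex.X₂
  have hpure {ι : Type} [Fintype ι] (r : ι → R) :
      Subsingleton (Abelian.Ext M (ModuleCat.of R (vanishingCharacters r)) 1) ↔
        ∀ k, S.f.hom k ∈ smulSubgroup r S.X₂ → k ∈ smulSubgroup r S.X₁ := by
    rw [← vanishingCharacters.forall_exists_comp_eq_iff]
    refine (subsingleton_ext_X₃_one_iff hS (Abelian.Ext.subsingleton_of_projective _ _ 0)).trans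
      ⟨fun h f ↦ ?_, fun h f ↦ ?_⟩
    · obtain ⟨g, hg⟩ := h (ModuleCat.ofHom f)
      exact ⟨g.hom, congrArg ModuleCat.Hom.hom hg⟩
    · obtain ⟨g, hg⟩ := h f.hom
      exact ⟨ModuleCat.ofHom g, ModuleCat.hom_ext hg⟩
  refine ⟨fun hM ι _ r ↦ (hpure r).2 fun k ↦ hM.mem_smulSubgroup_of_map_mem
    hS.moduleCat_injective_f hfg hS.moduleCat_surjective_g r, fun h ↦ ?_⟩
  exact hflat.of_mem_smulSubgroup_of_map_mem hfg hS.moduleCat_surjective_g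
    fun ι _ r ↦ (hpure r).1 (h ι r)

theorem IsFlatMod.subsingleton_ext (hM : IsFlatMod R M) {ι : Type} [Finite ι] (r : ι → R)
    (n : ℕ) : Subsingleton (Abelian.Ext M (ModuleCat.of R (vanishingCharacters r)) (n + 1)) := by
  obtain ⟨_⟩ := nonempty_fintype ι
  induction n generalizing M with
  | zero => exact isFlatMod_iff_subsingleton_ext_one.1 hM ι r
  | succ n ih =>
    have hS := M.shortExact_projectiveShortComplex
    have hker : IsFlatMod R M.projectiveShortComplex.X₁ :=
      (IsFlatMod.of_free (R := R) M.projectiveShortComplex.X₂).left_of_exact hM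
        hS.moduleCat_injective_f
        ((ShortComplex.ShortExact.moduleCat_exact_iff_function_exact _).1 hS.exact)
        hS.moduleCat_surjective_g
    exact (subsingleton_ext_X₃_succ_iff hS (Abelian.Ext.subsingleton_of_projective _ _ n)
      (Abelian.Ext.subsingleton_of_projective _ _ (n + 1))).2 (ih hker)

theorem fdLE_iff_subsingleton_ext {n : ℕ} :
    fdLE R n M ↔ ∀ (ι : Type) [Fintype ι] (r : ι → R),
      Subsingleton (Abelian.Ext M (ModuleCat.of R (vanishingCharacters r)) (n + 1)) := by
  induction n generalizing M with
  | zero => exact isFlatMod_iff_subsingleton_ext_one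
  | succ n ih =>
    constructor
    · rintro ⟨K, F, f, g, hF, hf, hg, hfg, hK⟩ ι _ r
      have hS : (ShortComplex.mk f g
          (ModuleCat.hom_ext (LinearMap.ext hfg.apply_apply_eq_zero))).ShortExact :=
        ModuleCat.shortComplex_shortExact _ hfg hf hg
      exact (subsingleton_ext_X₃_succ_iff hS (hF.subsingleton_ext r n)
        (hF.subsingleton_ext r (n + 1))).2 (ih.1 hK ι r)
    · intro h
      have hS := M.shortExact_projectiveShortComplex
      refine ⟨_, _, M.projectiveShortComplex.f, M.projectiveShortComplex.g,
        .of_free M.projectiveShortComplex.X₂, hS.moduleCat_injective_f,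
        hS.moduleCat_surjective_g,
        (ShortComplex.ShortExact.moduleCat_exact_iff_function_exact _).1 hS.exact,
        ih.2 fun ι _ r ↦ ?_⟩
      exact (subsingleton_ext_X₃_succ_iff hS (Abelian.Ext.subsingleton_of_projective _ _ n)
        (Abelian.Ext.subsingleton_of_projective _ _ (n + 1))).1 (h ι r)

end FlatDimension

/-- For `n ≥ 1`, `fd_R M ≤ n` iff `Ext^1_R(M, N) = 0` for every `L_n`-injective module `N`. -/
theorem stmt9 (n : ℕ) (hn : 1 ≤ n) (M : ModuleCat.{0} R) :
    fdLE R n M ↔ ∀ N : ModuleCat.{0} R, LnInj R n N → extVanish R 1 M N := by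
  refine ⟨fun hM N hN ↦ hN M hM, fun h ↦ fdLE_iff_subsingleton_ext.2 fun ι _ r ↦ ?_⟩
  let W := ModuleCat.of R (vanishingCharacters r)
  obtain ⟨N, hN⟩ := exists_cosyzygy n W
  have extVanish_iff (X : ModuleCat.{0} R) :
      extVanish R 1 X N ↔ Subsingleton (Abelian.Ext X W (n + 1)) :=
    (subsingleton_leftDerivedExt_iff ℤ X N 0).trans (hN X)
  have hN_inj : LnInj R n N := fun X hX ↦
    (extVanish_iff X).2 (fdLE_iff_subsingleton_ext.1 hX ι r)
  exact (extVanish_iff M).1 (h N hN_inj)
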